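/- If p, q ∈ ℍ(K) are nonzero quaternions with pLq ⊆ L (where pLq = {p x q : x ∈ L}), then there exists a rational number α such that q = α p̃. -/

import Mathlib

/-!
The twist map is additive and reverses products on `ℍ(K)`, it is an involution there, and it fixes
the four generators of `L`, hence every element of `L` (`twist_of_mem_Lsub`). Applying it to
`p x q ∈ L` therefore gives `p x q = q̃ x p̃` for every `x ∈ L`. With `c = q̃⁻¹ p`, the case `x = 1`
reads `c = p̃ q⁻¹`, and the remaining cases say that `c` commutes with `L`. Since `L` spans `ℍ`
over `ℝ`, the quaternion `c` is a real number (`eq_coe_of_commute`), so `p = c q̃` and `p̃ = c q`.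
Hence `c ∈ K`, and twisting the first identity gives `p̃ = c′ q`. Thus `c = c′`, so `c` is a
nonzero rational number and `q = c⁻¹ p̃`.
-/

noncomputable section

open Quaternion

/-- Hamilton's quaternion algebra over `ℝ`. -/
abbrev HR := Quaternion ℝ

/-- the golden ratio `τ = (1+√5)/2`. -/
def tau : ℝ := (1 + Real.sqrt 5) / 2

/-- membership in the quadratic field `K = ℚ(√5)`, viewed inside `ℝ`. -/
def inK (x : ℝ) : Prop := ∃ q r : ℚ, x = (q : ℝ) + (r : ℝ) * Real.sqrt 5

/-- membership in the ring of integers `𝔬 = ℤ[τ]` of `K`, viewed inside `ℝ`. -/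
def inO (x : ℝ) : Prop := ∃ m n : ℤ, x = (m : ℝ) + (n : ℝ) * tau

/-- membership in `ℍ(K)`: all four components lie in `K`. -/
def inHK (q : HR) : Prop := inK q.re ∧ inK q.imI ∧ inK q.imJ ∧ inK q.imK

open scoped Classical in
/-- Galois conjugation `′` on `K = ℚ(√5)`, sending `q + r√5` to `q - r√5`
(extended by the identity off `K`; on `K` this is the usual Galois conjugation,
since the representation `x = q + r√5` with `q, r ∈ ℚ` is unique). -/
noncomputable def gal (x : ℝ) : ℝ :=
  if h : ∃ q r : ℚ, x = (q : ℝ) + (r : ℝ) * Real.sqrt 5 then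
    ((h.choose : ℝ) - (h.choose_spec.choose : ℝ) * Real.sqrt 5)
  else x

/-- the twist map `q = (a,b,c,d) ↦ q̃ = (a′,b′,d′,c′)` on `ℍ(K)`. -/
def twist (q : HR) : HR := ⟨gal q.re, gal q.imI, gal q.imK, gal q.imJ⟩

def v₁ : HR := ⟨1, 0, 0, 0⟩
def v₂ : HR := ⟨0, 1, 0, 0⟩
def v₃ : HR := ⟨1/2, 1/2, 1/2, 1/2⟩
def v₄ : HR := ⟨(1 - tau)/2, tau/2, 0, 1/2⟩

/-- membership in the icosian ring `𝕀`: the `𝔬`-span of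
`(1,0,0,0)`, `(0,1,0,0)`, `½(1,1,1,1)`, `½(1−τ,τ,0,1)`. -/
def inIcosian (q : HR) : Prop :=
  ∃ a b c d : ℝ, inO a ∧ inO b ∧ inO c ∧ inO d ∧
    q = a • v₁ + b • v₂ + c • v₃ + d • v₄

def w₁ : HR := ⟨1, 0, 0, 0⟩
def w₂ : HR := ⟨-(1/2), 1/2, 1/2, 1/2⟩
def w₃ : HR := ⟨0, -1, 0, 0⟩
def w₄ : HR := ⟨0, 1/2, (tau - 1)/2, -(tau/2)⟩

/-- the lattice `L` (a copy of the root lattice `A₄`): the `ℤ`-span of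
`(1,0,0,0)`, `½(−1,1,1,1)`, `(0,−1,0,0)`, `½(0,1,τ−1,−τ)`. -/
def Lsub : AddSubgroup HR :=
  (Submodule.span ℤ ({w₁, w₂, w₃, w₄} : Set HR)).toAddSubgroup

/-- `Λ` is a similar sublattice (SSL) of `L`: `Λ = α R(L) ⊆ L` for some
`α > 0` and a linear isometry `R` of `ℍ ≅ ℝ⁴`. -/
def IsSSL (Λ : AddSubgroup HR) : Prop :=
  ∃ (α : ℝ) (R : HR ≃ₗᵢ[ℝ] HR), 0 < α ∧
    (Λ : Set HR) = (fun x => α • R x) '' (Lsub : Set HR) ∧ Λ ≤ Lsub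

/-- `p` is an `𝕀`-primitive icosian: `p ∈ 𝕀` and whenever `α ∈ K` with
`α p ∈ 𝕀`, one has `α ∈ 𝔬`. -/
def IPrimitive (p : HR) : Prop :=
  inIcosian p ∧ ∀ α : ℝ, inK α → inIcosian (α • p) → inO α

/-- an icosian `q` is admissible when `|q q̃|` is a rational integer. -/
def Admissible (q : HR) : Prop := ∃ n : ℤ, ‖q * twist q‖ = (n : ℝ)

lemma inO_add {x y : ℝ} (hx : inO x) (hy : inO y) : inO (x + y) := by
  obtain ⟨m, n, rfl⟩ := hx; obtain ⟨m', n', rfl⟩ := hy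
  exact ⟨m + m', n + n', by push_cast; ring⟩

lemma inO_neg {x : ℝ} (hx : inO x) : inO (-x) := by
  obtain ⟨m, n, rfl⟩ := hx
  exact ⟨-m, -n, by push_cast; ring⟩

/-- the icosian ring `𝕀` as an additive subgroup of `ℍ`. -/
def Isub : AddSubgroup HR where
  carrier := {q | inIcosian q}
  zero_mem' := ⟨0, 0, 0, 0, ⟨0, 0, by push_cast; ring⟩, ⟨0, 0, by push_cast; ring⟩,
    ⟨0, 0, by push_cast; ring⟩, ⟨0, 0, by push_cast; ring⟩, by simp⟩
  add_mem' := by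
    rintro x y ⟨a, b, c, d, ha, hb, hc, hd, rfl⟩ ⟨a', b', c', d', ha', hb', hc', hd', rfl⟩
    exact ⟨a + a', b + b', c + c', d + d', inO_add ha ha', inO_add hb hb',
      inO_add hc hc', inO_add hd hd', by simp [add_smul]; abel⟩
  neg_mem' := by
    rintro x ⟨a, b, c, d, ha, hb, hc, hd, rfl⟩
    exact ⟨-a, -b, -c, -d, inO_neg ha, inO_neg hb, inO_neg hc, inO_neg hd,
      by simp [neg_smul]; abel⟩

/-- the additive map `x ↦ p x p̃`. -/
def conjHom (p : HR) : HR →+ HR :=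
  AddMonoidHom.mk' (fun x => p * x * twist p) (fun a b => by simp [mul_add, add_mul])

/-- the additive map `x ↦ (1/|q q̃|) · q x q̃`. -/
def cslHom (q : HR) : HR →+ HR :=
  AddMonoidHom.mk' (fun x => (1 / ‖q * twist q‖) • (q * x * twist q))
    (fun a b => by simp [mul_add, add_mul, smul_add])

/-- the subgroup `L ∩ (1/|q q̃|) · q L q̃` of `ℍ`. -/
def cslSub (q : HR) : AddSubgroup HR := Lsub ⊓ Lsub.map (cslHom q)

/-- for a rotation `R`, the subgroup `Γ ∩ R(Γ)`. -/
def cslOf (Γ : AddSubgroup HR) (R : HR ≃ₗᵢ[ℝ] HR) : AddSubgroup HR :=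
  Γ ⊓ Γ.map R.toLinearEquiv.toLinearMap.toAddMonoidHom

/-- the standard Euclidean inner product on `ℍ ≅ ℝ⁴`. -/
def dot (x y : HR) : ℝ := x.re * y.re + x.imI * y.imI + x.imJ * y.imJ + x.imK * y.imK

/-- the dual lattice `L* = {x ∈ ℍ : ⟨x|y⟩ ∈ ℤ for all y ∈ L}`. -/
def Ldual : AddSubgroup HR where
  carrier := {x | ∀ y ∈ Lsub, ∃ n : ℤ, dot x y = n}
  zero_mem' := by intro y _; exact ⟨0, by simp [dot]⟩
  add_mem' := by
    intro a b ha hb y hy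
    obtain ⟨m, hm⟩ := ha y hy; obtain ⟨n, hn⟩ := hb y hy
    refine ⟨m + n, ?_⟩
    have : dot (a + b) y = dot a y + dot b y := by simp [dot]; ring
    rw [this, hm, hn]; push_cast; ring
  neg_mem' := by
    intro a ha y hy
    obtain ⟨m, hm⟩ := ha y hy
    refine ⟨-m, ?_⟩
    have : dot (-a) y = -dot a y := by simp [dot]; ring
    rw [this, hm]; push_cast; ring

/-! ### Galois conjugation on `K` -/

lemma rat_add_mul_sqrt_five_inj {a b c d : ℚ}
    (h : (a : ℝ) + b * Real.sqrt 5 = c + d * Real.sqrt 5) : a = c ∧ b = d := by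
  have hirr : Irrational (Real.sqrt 5) := by
    simpa using Nat.Prime.irrational_sqrt (p := 5) (by norm_num)
  have hbd : b = d := by
    by_contra hne
    have hne' : ((b : ℝ) - d) ≠ 0 := sub_ne_zero.mpr (by exact_mod_cast hne)
    refine hirr ⟨(c - a) / (b - d), ?_⟩
    push_cast
    rw [div_eq_iff hne']
    linarith
  subst hbd
  exact ⟨by exact_mod_cast add_right_cancel h, rfl⟩

/-- The chosen representation in the definition of `gal` is the given one, by uniqueness. -/
lemma gal_rat_add_mul (a b : ℚ) :
    gal ((a : ℝ) + b * Real.sqrt 5) = a - b * Real.sqrt 5 := by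
  have hex : ∃ q r : ℚ, (a : ℝ) + b * Real.sqrt 5 = (q : ℝ) + (r : ℝ) * Real.sqrt 5 :=
    ⟨a, b, rfl⟩
  unfold gal
  rw [dif_pos hex]
  obtain ⟨h₁, h₂⟩ := rat_add_mul_sqrt_five_inj hex.choose_spec.choose_spec
  exact congrArg₂ (fun s t : ℚ => (s : ℝ) - t * Real.sqrt 5) h₁.symm h₂.symm

lemma inK_rat (a : ℚ) : inK a := ⟨a, 0, by simp⟩

lemma gal_rat (a : ℚ) : gal a = a := by
  simpa using gal_rat_add_mul a 0

lemma inK_add {x y : ℝ} (hx : inK x) (hy : inK y) : inK (x + y) := by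
  obtain ⟨a, b, rfl⟩ := hx
  obtain ⟨c, d, rfl⟩ := hy
  exact ⟨a + c, b + d, by push_cast; ring⟩

lemma gal_add {x y : ℝ} (hx : inK x) (hy : inK y) : gal (x + y) = gal x + gal y := by
  obtain ⟨a, b, rfl⟩ := hx
  obtain ⟨c, d, rfl⟩ := hy
  have h : (a : ℝ) + b * Real.sqrt 5 + (c + d * Real.sqrt 5)
      = ((a + c : ℚ) : ℝ) + ((b + d : ℚ) : ℝ) * Real.sqrt 5 := by push_cast; ring
  rw [h, gal_rat_add_mul, gal_rat_add_mul, gal_rat_add_mul]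
  push_cast
  ring

lemma rat_mul_expand (a b c d : ℚ) : ((a : ℝ) + b * Real.sqrt 5) * (c + d * Real.sqrt 5)
    = ((a * c + 5 * b * d : ℚ) : ℝ) + ((a * d + b * c : ℚ) : ℝ) * Real.sqrt 5 := by
  have h5 : Real.sqrt 5 * Real.sqrt 5 = 5 := Real.mul_self_sqrt (by norm_num)
  push_cast
  linear_combination (b : ℝ) * d * h5

lemma inK_mul {x y : ℝ} (hx : inK x) (hy : inK y) : inK (x * y) := by
  obtain ⟨a, b, rfl⟩ := hx
  obtain ⟨c, d, rfl⟩ := hy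
  exact ⟨_, _, rat_mul_expand a b c d⟩

lemma gal_mul {x y : ℝ} (hx : inK x) (hy : inK y) : gal (x * y) = gal x * gal y := by
  obtain ⟨a, b, rfl⟩ := hx
  obtain ⟨c, d, rfl⟩ := hy
  have h5 : Real.sqrt 5 * Real.sqrt 5 = 5 := Real.mul_self_sqrt (by norm_num)
  rw [rat_mul_expand, gal_rat_add_mul, gal_rat_add_mul, gal_rat_add_mul]
  push_cast
  linear_combination -(b : ℝ) * d * h5

lemma inK_neg {x : ℝ} (hx : inK x) : inK (-x) := by
  simpa using inK_mul (inK_rat (-1)) hx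

lemma gal_neg {x : ℝ} (hx : inK x) : gal (-x) = -gal x := by
  have h := gal_mul (inK_rat (-1)) hx
  rw [gal_rat] at h
  simpa using h

lemma inK_sub {x y : ℝ} (hx : inK x) (hy : inK y) : inK (x - y) := by
  simpa [sub_eq_add_neg] using inK_add hx (inK_neg hy)

lemma gal_sub {x y : ℝ} (hx : inK x) (hy : inK y) : gal (x - y) = gal x - gal y := by
  rw [sub_eq_add_neg, gal_add hx (inK_neg hy), gal_neg hy, ← sub_eq_add_neg]

lemma inK_inv {x : ℝ} (hx : inK x) : inK x⁻¹ := by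
  obtain ⟨a, b, rfl⟩ := hx
  by_cases h0 : (a : ℝ) + b * Real.sqrt 5 = 0
  · rw [h0, inv_zero]
    exact ⟨0, 0, by simp⟩
  have hconj : (a : ℝ) - b * Real.sqrt 5 ≠ 0 := by
    intro hc
    have h1 : (a : ℝ) + ((-b : ℚ) : ℝ) * Real.sqrt 5
        = ((0 : ℚ) : ℝ) + ((0 : ℚ) : ℝ) * Real.sqrt 5 := by
      push_cast; linarith
    obtain ⟨ha, hb⟩ := rat_add_mul_sqrt_five_inj h1
    have hb' : b = 0 := neg_eq_zero.mp hb
    exact h0 (by simp [ha, hb'])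
  have h5 : Real.sqrt 5 * Real.sqrt 5 = 5 := Real.mul_self_sqrt (by norm_num)
  -- The norm `a² - 5b²` is the product of the two conjugates.
  have hn : (a : ℝ) * a - 5 * b * b
      = (a + b * Real.sqrt 5) * (a - b * Real.sqrt 5) := by
    linear_combination (b : ℝ) * b * h5
  have hn0 : (a : ℝ) * a - 5 * b * b ≠ 0 := hn ▸ mul_ne_zero h0 hconj
  refine ⟨a / (a * a - 5 * b * b), -b / (a * a - 5 * b * b), ?_⟩
  push_cast
  rw [inv_eq_iff_eq_inv, ← mul_eq_one_iff_eq_inv₀, hn]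
  · field_simp
    ring
  · have : (a : ℝ) / (a * a - 5 * b * b) + -b / (a * a - 5 * b * b) * Real.sqrt 5
        = (a - b * Real.sqrt 5) / (a * a - 5 * b * b) := by ring
    rw [this]
    exact div_ne_zero hconj hn0

lemma inK_gal {x : ℝ} (hx : inK x) : inK (gal x) := by
  obtain ⟨a, b, rfl⟩ := hx
  exact ⟨a, -b, by rw [gal_rat_add_mul]; push_cast; ring⟩

lemma gal_gal {x : ℝ} (hx : inK x) : gal (gal x) = x := by
  obtain ⟨a, b, rfl⟩ := hx
  have h : (a : ℝ) - b * Real.sqrt 5 = a + ((-b : ℚ) : ℝ) * Real.sqrt 5 := by push_cast; ring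
  rw [gal_rat_add_mul, h, gal_rat_add_mul]
  push_cast
  ring

lemma exists_rat_of_gal_eq {x : ℝ} (hx : inK x) (h : gal x = x) : ∃ a : ℚ, x = a := by
  obtain ⟨a, b, rfl⟩ := hx
  rw [gal_rat_add_mul] at h
  exact ⟨a, by linarith⟩

/-! ### The twist map on `ℍ(K)` -/

lemma twist_re (x : HR) : (twist x).re = gal x.re := rfl

lemma twist_imI (x : HR) : (twist x).imI = gal x.imI := rfl

lemma twist_imJ (x : HR) : (twist x).imJ = gal x.imK := rfl

lemma twist_imK (x : HR) : (twist x).imK = gal x.imJ := rfl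

lemma inHK_twist {x : HR} (hx : inHK x) : inHK (twist x) :=
  ⟨inK_gal hx.1, inK_gal hx.2.1, inK_gal hx.2.2.2, inK_gal hx.2.2.1⟩

lemma twist_twist {x : HR} (hx : inHK x) : twist (twist x) = x := by
  ext
  exacts [gal_gal hx.1, gal_gal hx.2.1, gal_gal hx.2.2.1, gal_gal hx.2.2.2]

lemma inHK_mul {x y : HR} (hx : inHK x) (hy : inHK y) : inHK (x * y) := by
  obtain ⟨h1, h2, h3, h4⟩ := hx
  obtain ⟨k1, k2, k3, k4⟩ := hy
  refine ⟨?_, ?_, ?_, ?_⟩ <;>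
    simp only [Quaternion.re_mul, Quaternion.imI_mul, Quaternion.imJ_mul, Quaternion.imK_mul] <;>
    apply_rules [inK_sub, inK_add, inK_neg, inK_mul]

/-- The four components of a product of quaternions are compatible with Galois conjugation. -/
lemma gal_mul_components {a b c d e f g k : ℝ} (ha : inK a) (hb : inK b) (hc : inK c)
    (hd : inK d) (he : inK e) (hf : inK f) (hg : inK g) (hk : inK k) :
    gal (a * e - b * f - c * g - d * k)
        = gal a * gal e - gal b * gal f - gal c * gal g - gal d * gal k ∧
      gal (a * f + b * e + c * k - d * g)
        = gal a * gal f + gal b * gal e + gal c * gal k - gal d * gal g ∧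
      gal (a * g - b * k + c * e + d * f)
        = gal a * gal g - gal b * gal k + gal c * gal e + gal d * gal f ∧
      gal (a * k + b * g - c * f + d * e)
        = gal a * gal k + gal b * gal g - gal c * gal f + gal d * gal e := by
  simp (maxDischargeDepth := 8) only [gal_add, gal_sub, gal_mul, inK_add, inK_sub, inK_mul,
    ha, hb, hc, hd, he, hf, hg, hk, and_self]

/-- Exchanging `j` and `k` is an anti-automorphism of `ℍ`, so the twist reverses products. -/
lemma twist_mul {x y : HR} (hx : inHK x) (hy : inHK y) :
    twist (x * y) = twist y * twist x := by
  obtain ⟨h1, h2, h3, h4⟩ := hx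
  obtain ⟨k1, k2, k3, k4⟩ := hy
  obtain ⟨e1, e2, e3, e4⟩ := gal_mul_components h1 h2 h3 h4 k1 k2 k3 k4
  apply Quaternion.ext
  · rw [twist_re, Quaternion.re_mul, Quaternion.re_mul]
    exact e1.trans (by simp only [twist_re, twist_imI, twist_imJ, twist_imK]; ring)
  · rw [twist_imI, Quaternion.imI_mul, Quaternion.imI_mul]
    exact e2.trans (by simp only [twist_re, twist_imI, twist_imJ, twist_imK]; ring)
  · rw [twist_imJ, Quaternion.imK_mul, Quaternion.imJ_mul]
    exact e4.trans (by simp only [twist_re, twist_imI, twist_imJ, twist_imK]; ring)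
  · rw [twist_imK, Quaternion.imJ_mul, Quaternion.imK_mul]
    exact e3.trans (by simp only [twist_re, twist_imI, twist_imJ, twist_imK]; ring)

lemma twist_smul {c : ℝ} {x : HR} (hc : inK c) (hx : inHK x) :
    twist (c • x) = gal c • twist x := by
  obtain ⟨h1, h2, h3, h4⟩ := hx
  apply Quaternion.ext <;> simp [twist_re, twist_imI, twist_imJ, twist_imK, gal_mul, hc, h1, h2, h3, h4]

/-- The additive group of elements of `ℍ(K)` that are fixed by the twist map. -/
def twistFixed : AddSubgroup HR where
  carrier := {x | inHK x ∧ twist x = x}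
  zero_mem' := by
    have h0 : inK 0 := by simpa using inK_rat 0
    have g0 : gal 0 = 0 := by simpa using gal_rat 0
    refine ⟨⟨h0, h0, h0, h0⟩, ?_⟩
    apply Quaternion.ext <;> simp [twist_re, twist_imI, twist_imJ, twist_imK, g0]
  add_mem' := by
    rintro x y ⟨⟨h1, h2, h3, h4⟩, hx⟩ ⟨⟨k1, k2, k3, k4⟩, hy⟩
    refine ⟨⟨inK_add h1 k1, inK_add h2 k2, inK_add h3 k3, inK_add h4 k4⟩, ?_⟩
    conv_rhs => rw [← hx, ← hy]
    apply Quaternion.ext <;> simp [twist_re, twist_imI, twist_imJ, twist_imK, gal_add, h1, h2, h3, h4, k1, k2, k3, k4]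
  neg_mem' := by
    rintro x ⟨⟨h1, h2, h3, h4⟩, hx⟩
    refine ⟨⟨inK_neg h1, inK_neg h2, inK_neg h3, inK_neg h4⟩, ?_⟩
    conv_rhs => rw [← hx]
    apply Quaternion.ext <;> simp [twist_re, twist_imI, twist_imJ, twist_imK, gal_neg, h1, h2, h3, h4]

/-! ### The lattice `L` -/

lemma mem_twistFixed_of_coords (x : HR) (a b c d e f g k : ℚ)
    (h1 : x.re = a + b * Real.sqrt 5) (h2 : x.imI = c + d * Real.sqrt 5)
    (h3 : x.imJ = e + f * Real.sqrt 5) (h4 : x.imK = g + k * Real.sqrt 5)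
    (hb : b = 0) (hd : d = 0) (heg : e = g) (hfk : f = -k) : x ∈ twistFixed := by
  refine ⟨⟨⟨_, _, h1⟩, ⟨_, _, h2⟩, ⟨_, _, h3⟩, ⟨_, _, h4⟩⟩, ?_⟩
  apply Quaternion.ext <;>
    simp only [twist_re, twist_imI, twist_imJ, twist_imK, h1, h2, h3, h4, gal_rat_add_mul] <;>
    simp [hb, hd, heg, hfk, sub_eq_add_neg]

lemma Lsub_le_twistFixed : Lsub ≤ twistFixed := by
  have h : Submodule.span ℤ ({w₁, w₂, w₃, w₄} : Set HR)
      ≤ AddSubgroup.toIntSubmodule twistFixed := by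
    rw [Submodule.span_le]
    rintro x (rfl | rfl | rfl | rfl)
    · exact mem_twistFixed_of_coords _ 1 0 0 0 0 0 0 0 (by simp [w₁]) (by simp [w₁])
        (by simp [w₁]) (by simp [w₁]) rfl rfl rfl (by norm_num)
    · exact mem_twistFixed_of_coords _ (-1 / 2) 0 (1 / 2) 0 (1 / 2) 0 (1 / 2) 0
        (by norm_num [w₂]) (by norm_num [w₂]) (by norm_num [w₂]) (by norm_num [w₂])
        rfl rfl rfl (by norm_num)
    · exact mem_twistFixed_of_coords _ 0 0 (-1) 0 0 0 0 0 (by simp [w₃]) (by simp [w₃])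
        (by simp [w₃]) (by simp [w₃]) rfl rfl rfl (by norm_num)
    · exact mem_twistFixed_of_coords _ 0 0 (1 / 2) 0 (-1 / 4) (1 / 4) (-1 / 4) (-1 / 4)
        (by simp [w₄]) (by norm_num [w₄]) (by simp only [w₄, tau]; push_cast; ring)
        (by simp only [w₄, tau]; push_cast; ring) rfl rfl rfl (by norm_num)
  exact fun x hx => h hx

lemma twist_of_mem_Lsub {x : HR} (hx : x ∈ Lsub) : twist x = x := (Lsub_le_twistFixed hx).2

lemma inHK_of_mem_Lsub {x : HR} (hx : x ∈ Lsub) : inHK x := (Lsub_le_twistFixed hx).1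

lemma generator_mem_Lsub {x : HR} (hx : x ∈ ({w₁, w₂, w₃, w₄} : Set HR)) : x ∈ Lsub :=
  Submodule.subset_span hx

/-- Already `w₂` and `w₃ = -i` have only real numbers in their common centralizer. -/
lemma eq_coe_of_commute {c : HR} (h2 : c * w₂ = w₂ * c) (h3 : c * w₃ = w₃ * c) :
    c = (c.re : HR) := by
  have e1 := congrArg QuaternionAlgebra.imJ h3
  have e2 := congrArg QuaternionAlgebra.imK h3
  have e3 := congrArg QuaternionAlgebra.imK h2
  rw [Quaternion.imJ_mul, Quaternion.imJ_mul] at e1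
  rw [Quaternion.imK_mul, Quaternion.imK_mul] at e2 e3
  simp only [w₂, w₃] at e1 e2 e3
  ext <;> simp <;> linarith

lemma inK_of_smul_eq {c : ℝ} {x y : HR} (hx : inHK x) (hx0 : x ≠ 0) (hy : inHK y)
    (h : y = c • x) : inK c := by
  have key : ∀ {s t : ℝ}, inK s → inK t → s ≠ 0 → t = c * s → inK c := by
    intro s t hs ht hs0 hst
    have : c = t * s⁻¹ := by rw [hst]; field_simp
    rw [this]
    exact inK_mul ht (inK_inv hs)
  obtain ⟨h1, h2, h3, h4⟩ := hx
  obtain ⟨k1, k2, k3, k4⟩ := hy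
  by_contra hc
  apply hx0
  ext
  · by_contra h0
    exact hc (key h1 k1 h0 (by simp [h]))
  · by_contra h0
    exact hc (key h2 k2 h0 (by simp [h]))
  · by_contra h0
    exact hc (key h3 k3 h0 (by simp [h]))
  · by_contra h0
    exact hc (key h4 k4 h0 (by simp [h]))

/-- if `p, q ∈ ℍ(K)` are nonzero with `p L q ⊆ L`, then
`q = α p̃` for some rational `α`. -/
theorem q_eq_rat_multiple_of_twist (p q : HR) (hp : p ≠ 0) (hq : q ≠ 0)
    (hpK : inHK p) (hqK : inHK q)
    (h : ∀ x ∈ Lsub, p * x * q ∈ Lsub) :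
    ∃ α : ℚ, q = (α : ℝ) • twist p := by
  have hfix : ∀ x ∈ Lsub, p * x * q = twist q * (x * twist p) := by
    intro x hx
    have hxK := inHK_of_mem_Lsub hx
    have e := twist_of_mem_Lsub (h x hx)
    rw [twist_mul (inHK_mul hpK hxK) hqK, twist_mul hpK hxK, twist_of_mem_Lsub hx] at e
    exact e.symm
  have hr : twist q ≠ 0 := by
    intro h0
    apply hq
    rw [← twist_twist hqK, h0]
    exact twist_of_mem_Lsub Lsub.zero_mem
  set c : HR := (twist q)⁻¹ * p with hc
  have hcx : ∀ x ∈ Lsub, c * x * q = x * twist p := by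
    intro x hx
    rw [hc, mul_assoc _ p, mul_assoc, hfix x hx, inv_mul_cancel_left₀ hr]
  have hw1 : w₁ = 1 := rfl
  have hcq : c * q = twist p := by
    have e := hcx w₁ (generator_mem_Lsub (by simp))
    rwa [hw1, mul_one, one_mul] at e
  have hcomm : ∀ x ∈ Lsub, c * x = x * c := by
    intro x hx
    apply mul_right_cancel₀ hq
    rw [hcx x hx, mul_assoc, hcq]
  have hcre := eq_coe_of_commute (hcomm w₂ (generator_mem_Lsub (by simp)))
    (hcomm w₃ (generator_mem_Lsub (by simp)))
  have hpt : twist p = c.re • q := by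
    rw [← hcq, hcre, Quaternion.coe_mul_eq_smul, Quaternion.re_coe]
  have hpr : p = c.re • twist q := by
    have e : p = twist q * c := by rw [hc, mul_inv_cancel_left₀ hr]
    rw [e, hcre, Quaternion.mul_coe_eq_smul, Quaternion.re_coe]
  have hcK : inK c.re := inK_of_smul_eq hqK hq (inHK_twist hpK) hpt
  have hgal : gal c.re = c.re := by
    have e : twist p = gal c.re • q := by
      conv_lhs => rw [hpr]
      rw [twist_smul hcK (inHK_twist hqK), twist_twist hqK]
    exact smul_left_injective ℝ hq (e.symm.trans hpt)
  obtain ⟨a, ha⟩ := exists_rat_of_gal_eq hcK hgal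
  have ha0 : (a : ℝ) ≠ 0 := by
    intro h0
    apply hp
    rw [hpr, ha, h0, zero_smul]
  refine ⟨a⁻¹, ?_⟩
  rw [hpt, ha, smul_smul, Rat.cast_inv, inv_mul_cancel₀ ha0, one_smul]
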